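/- Let Δx, Δy > 0, let v^x, v^y ∈ ℝ, and let a, b : ℤ×ℤ → ℝ be grid functions, where a(i,j) represents the x-edge value J^x at edge (i, j+1/2) and b(i,j) represents the y-edge value J^y at edge (i+1/2, j). Assume the discrete circulation vanishes in every cell: for all i,j, (b(i,j) − b(i−1,j))/Δx = (a(i,j) − a(i,j−1))/Δy. Define the locally Lax-Friedrichs vertex potential φ(i,j) = (v^x/2)(a(i+1,j) + a(i,j)) − (|v^x|/2)(a(i+1,j) − a(i,j)) + (v^y/2)(b(i,j+1) + b(i,j)) − (|v^y|/2)(b(i,j+1) − b(i,j)) at vertex (i+1/2, j+1/2). Then for all i,j: (φ(i,j) − φ(i−1,j))/Δx = (v^x/(2Δx))(a(i+1,j) − a(i−1,j)) + (v^y/(2Δy))(a(i,j+1) − a(i,j−1)) − (|v^x|/(2Δx))(a(i+1,j) − 2a(i,j) + a(i−1,j)) − (|v^y|/(2Δy))(a(i,j+1) − 2a(i,j) + a(i,j−1)); i.e., the edge-based curl-free update with multidimensionally upwinded vertex potentials equals a centered advection discretization plus nonnegative-coefficient dissipation terms. -/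

import Mathlib

/-- The locally Lax-Friedrichs vertex potential at vertex (i+1/2, j+1/2)
(eqn. 2.29): centered averages of the adjacent edge components plus upwind
dissipation terms. -/
noncomputable def llfPot2 (vx vy : ℝ) (a b : ℤ × ℤ → ℝ) (i j : ℤ) : ℝ :=
  vx / 2 * (a (i + 1, j) + a (i, j)) - |vx| / 2 * (a (i + 1, j) - a (i, j)) +
    vy / 2 * (b (i, j + 1) + b (i, j)) - |vy| / 2 * (b (i, j + 1) - b (i, j))

section TwoPointFlux

variable {R : Type*} [CommRing R]

/-- The two-point flux between a left state `l` and a right state `r`, with centered coefficient `α`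
and dissipation coefficient `β`. The usual factors `1 / 2` are absorbed into the coefficients, so
the locally Lax-Friedrichs flux at speed `v` has `α = v / 2` and `β = |v| / 2`. -/
def twoPointFlux (α β l r : R) : R :=
  α * (r + l) - β * (r - l)

lemma mul_twoPointFlux_sub (p α β l r l' r' : R) :
    p * (twoPointFlux α β l r - twoPointFlux α β l' r') =
      twoPointFlux α β (p * (l - l')) (p * (r - r')) := by
  simp only [twoPointFlux]
  ring

lemma twoPointFlux_sub_twoPointFlux (α β l m r : R) :
    twoPointFlux α β m r - twoPointFlux α β l m = α * (r - l) - β * (r - 2 * m + l) := by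
  simp only [twoPointFlux]
  ring

/-- The vertex potential at `(i + 1/2, j + 1/2)` built from two-point fluxes: the `x`-flux of the
`x`-edge components `a` plus the `y`-flux of the `y`-edge components `b`, indexed as in
`llfPot2`. -/
def vertexPotential (αx βx αy βy : R) (a b : ℤ × ℤ → R) (i j : ℤ) : R :=
  twoPointFlux αx βx (a (i, j)) (a (i + 1, j)) + twoPointFlux αy βy (b (i, j)) (b (i, j + 1))

/-- The flux is linear in its states, so an `x`-difference of `b`-fluxes is a flux of
`x`-differences of `b`, which vanishing circulation trades for `y`-differences of `a`.
Here `p` and `q` stand for `1 / Δx` and `1 / Δy`. -/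
lemma mul_twoPointFlux_sub_eq_of_curlFree {p q : R} {a b : ℤ × ℤ → R}
    (hcurl : ∀ i j : ℤ, p * (b (i, j) - b (i - 1, j)) = q * (a (i, j) - a (i, j - 1)))
    (α β : R) (i j : ℤ) :
    p * (twoPointFlux α β (b (i, j)) (b (i, j + 1)) -
        twoPointFlux α β (b (i - 1, j)) (b (i - 1, j + 1))) =
      q * (twoPointFlux α β (a (i, j)) (a (i, j + 1)) -
        twoPointFlux α β (a (i, j - 1)) (a (i, j))) := by
  rw [mul_twoPointFlux_sub, hcurl i j, hcurl i (j + 1), add_sub_cancel_right,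
    ← mul_twoPointFlux_sub]

theorem stmt_6_general {p q : R} {a b : ℤ × ℤ → R}
    (hcurl : ∀ i j : ℤ, p * (b (i, j) - b (i - 1, j)) = q * (a (i, j) - a (i, j - 1)))
    (αx βx αy βy : R) (i j : ℤ) :
    p * (vertexPotential αx βx αy βy a b i j - vertexPotential αx βx αy βy a b (i - 1) j) =
      p * (αx * (a (i + 1, j) - a (i - 1, j)) -
          βx * (a (i + 1, j) - 2 * a (i, j) + a (i - 1, j))) +
        q * (αy * (a (i, j + 1) - a (i, j - 1)) -
          βy * (a (i, j + 1) - 2 * a (i, j) + a (i, j - 1))) := by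
  simp only [vertexPotential, sub_add_cancel]
  rw [add_sub_add_comm, mul_add, mul_twoPointFlux_sub_eq_of_curlFree hcurl,
    twoPointFlux_sub_twoPointFlux, twoPointFlux_sub_twoPointFlux]

end TwoPointFlux

lemma llfPot2_eq_vertexPotential (vx vy : ℝ) (a b : ℤ × ℤ → ℝ) (i j : ℤ) :
    llfPot2 vx vy a b i j = vertexPotential (vx / 2) (|vx| / 2) (vy / 2) (|vy| / 2) a b i j :=
  add_sub_assoc _ _ _

/-- on a discretely curl-free 2D mesh, the edge-based update built
from LLF vertex potentials equals a centered advection discretization plus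
nonnegative-coefficient dissipation terms (eqn. 2.30). -/
theorem stmt_6 (Δx Δy : ℝ) (hΔx : 0 < Δx) (hΔy : 0 < Δy) (vx vy : ℝ)
    (a b : ℤ × ℤ → ℝ)
    (hcurl : ∀ i j : ℤ,
      (b (i, j) - b (i - 1, j)) / Δx = (a (i, j) - a (i, j - 1)) / Δy) :
    ∀ i j : ℤ,
      (llfPot2 vx vy a b i j - llfPot2 vx vy a b (i - 1) j) / Δx =
        vx / (2 * Δx) * (a (i + 1, j) - a (i - 1, j)) +
          vy / (2 * Δy) * (a (i, j + 1) - a (i, j - 1)) -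
          |vx| / (2 * Δx) * (a (i + 1, j) - 2 * a (i, j) + a (i - 1, j)) -
          |vy| / (2 * Δy) * (a (i, j + 1) - 2 * a (i, j) + a (i, j - 1)) := by
  intro i j
  simp only [llfPot2_eq_vertexPotential, div_eq_inv_mul _ Δx, div_eq_inv_mul _ Δy] at hcurl ⊢
  linear_combination stmt_6_general hcurl (vx / 2) (|vx| / 2) (vy / 2) (|vy| / 2) i j
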